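/- arXiv:2005.08300 — 2 statements merged into one kernel-verified Lean document; each statement's English description precedes it below -/
import Mathlib

section
/- There are exactly 2208 Boolean functions f: F_2^5 → F_2 of algebraic degree exactly 2 with zero constant term in their ANF such that f is semi-bent and the function f*: F_2^n → F_2 given by the CA-based construction is semi-bent for every n with 5 ≤ n ≤ 20; exactly 280 of these functions additionally have the property that f* is balanced for every n with 5 ≤ n ≤ 20. -/
/-- The CA-based construction: given a local rule `f` of `m` variables and `n ≥ m`,
the `n`-variable function `f*` is the XOR of all output cells of the no-boundary CA. -/
def caStar (m n : ℕ) (h : m ≤ n) (f : (Fin m → ZMod 2) → ZMod 2) :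
    (Fin n → ZMod 2) → ZMod 2 :=
  fun x => ∑ i : Fin (n - m + 1),
    f (fun j => x ⟨i.val + j.val, by have hi := i.isLt; have hj := j.isLt; omega⟩)

/-- The ANF coefficient `a_I` of a Boolean function, via the Möbius transform:
`a_I = ⊕_{x : supp(x) ⊆ I} f(x)`. -/
def anf {n : ℕ} (f : (Fin n → ZMod 2) → ZMod 2) (I : Finset (Fin n)) : ZMod 2 :=
  ∑ x ∈ Finset.univ.filter (fun x : Fin n → ZMod 2 => ∀ i, x i = 1 → i ∈ I), f x

/-- The algebraic degree of a Boolean function: `max {|I| : a_I ≠ 0}` (0 for the zero function). -/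
def algDegree {n : ℕ} (f : (Fin n → ZMod 2) → ZMod 2) : ℕ :=
  (Finset.univ.filter fun I : Finset (Fin n) => anf f I ≠ 0).sup Finset.card

/-- The Walsh transform `W_f(a) = Σ_x (-1)^(f(x) ⊕ a·x)`. -/
def walsh {n : ℕ} (f : (Fin n → ZMod 2) → ZMod 2) (a : Fin n → ZMod 2) : ℤ :=
  ∑ x : Fin n → ZMod 2, (-1 : ℤ) ^ (f x + ∑ i, a i * x i).val

/-- The semi-bent value `λ`: `2^((n+1)/2)` for odd `n`, `2^((n+2)/2)` for even `n`. -/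
def sbLambda (n : ℕ) : ℤ := if Odd n then 2 ^ ((n + 1) / 2) else 2 ^ ((n + 2) / 2)

/-- A Boolean function is semi-bent if its Walsh transform takes only the values `0, λ, -λ`. -/
def semiBent {n : ℕ} (f : (Fin n → ZMod 2) → ZMod 2) : Prop :=
  ∀ a, walsh f a = 0 ∨ walsh f a = sbLambda n ∨ walsh f a = -sbLambda n

/-- A Boolean function is balanced if it takes the value 1 exactly `2^(n-1)` times. -/
def balanced {n : ℕ} (f : (Fin n → ZMod 2) → ZMod 2) : Prop :=
  (Finset.univ.filter fun x => f x = 1).card = 2 ^ (n - 1)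

/-- `b` is a linear structure of `g` if the derivative `D_b g(x) = g(x) ⊕ g(x ⊕ b)` is constant. -/
def isLinearStructure {n : ℕ} (g : (Fin n → ZMod 2) → ZMod 2)
    (b : Fin n → ZMod 2) : Prop :=
  (∀ x, g x + g (x + b) = 0) ∨ (∀ x, g x + g (x + b) = 1)


/-! ### Character sums -/

def chi (z : ZMod 2) : ℤ := (-1 : ℤ) ^ z.val

lemma chi_add (a b : ZMod 2) : chi (a + b) = chi a * chi b := by
  revert a b; decide

lemma chi_zero : chi 0 = 1 := by decide

lemma z2_cases (a : ZMod 2) : a = 0 ∨ a = 1 := by revert a; decide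

lemma z2_add_self (a : ZMod 2) : a + a = 0 := by revert a; decide

lemma sum_chi {G : Type*} [AddCommGroup G] [Fintype G] (h : G → ZMod 2)
    (hh : ∀ x y, h (x + y) = h x + h y) [Decidable (∀ x, h x = 0)] :
    ∑ x, chi (h x) = if ∀ x, h x = 0 then (Fintype.card G : ℤ) else 0 := by
  split_ifs with h0
  · simp [h0, chi_zero]
  · push Not at h0
    obtain ⟨b, hb⟩ := h0
    have hb1 : h b = 1 := (z2_cases _).resolve_left hb
    have h1 : ∑ x, chi (h x) = ∑ x, chi (h (x + b)) :=
      (Equiv.sum_comp (Equiv.addRight b) (fun x => chi (h x))).symm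
    have h2 : ∑ x, chi (h (x + b)) = - ∑ x, chi (h x) := by
      rw [← Finset.sum_neg_distrib]
      refine Finset.sum_congr rfl fun x _ => ?_
      rw [hh, hb1, chi_add]
      have : chi 1 = -1 := by decide
      rw [this]; ring
    linarith

abbrev V2 (n : ℕ) := Fin n → ZMod 2

/-- `g` is quadratic with companion form `B` -/
def IsQ {n : ℕ} (g : V2 n → ZMod 2) (B : V2 n →ₗ[ZMod 2] V2 n →ₗ[ZMod 2] ZMod 2) : Prop :=
  ∀ x y, g (x + y) = g x + g y + B x y

lemma IsQ.symm {n : ℕ} {g : V2 n → ZMod 2} {B} (h : IsQ g B) (x y) : B x y = B y x := by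
  have h1 := h x y
  have h2 := h y x
  rw [add_comm y x, h1] at h2
  linear_combination h2

lemma IsQ.zero {n : ℕ} {g : V2 n → ZMod 2} {B} (h : IsQ g B) : g 0 = 0 := by
  have := h 0 0
  simpa using this

open Classical in
lemma IsQ.sq {n : ℕ} {g : V2 n → ZMod 2} {B} (h : IsQ g B) :
    (∑ x, chi (g x)) ^ 2 =
      if ∀ b ∈ LinearMap.ker B, g b = 0 then 2 ^ n * (Nat.card (LinearMap.ker B) : ℤ) else 0 := by
  have e1 : (∑ x, chi (g x)) ^ 2 = ∑ b, ∑ x, chi (g b) * chi (B x b) := by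
    rw [pow_two, Finset.sum_mul_sum]
    rw [Finset.sum_comm (f := fun b x => chi (g b) * chi (B x b))]
    refine Finset.sum_congr rfl fun x _ => ?_
    rw [← Equiv.sum_comp (Equiv.addLeft x)]
    refine Finset.sum_congr rfl fun b _ => ?_
    simp only [Equiv.coe_addLeft]
    rw [← chi_add, ← chi_add, h x b]
    congr 1
    linear_combination z2_add_self (g x)
  have e2 : ∀ b, ∑ x, chi (g b) * chi (B x b) =
      if b ∈ LinearMap.ker B then 2 ^ n * chi (g b) else 0 := by
    intro b
    rw [← Finset.mul_sum, sum_chi (fun x => B x b) (by simp)]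
    have : (∀ x, B x b = 0) ↔ b ∈ LinearMap.ker B := by
      rw [LinearMap.mem_ker, LinearMap.ext_iff]
      simp only [LinearMap.zero_apply]
      exact forall_congr' fun x => by rw [h.symm]
    simp only [this]
    split_ifs
    · simp [mul_comm]
    · simp
  rw [e1, Finset.sum_congr rfl fun b _ => e2 b, ← Finset.sum_filter, ← Finset.mul_sum]
  have e3 : ∑ b ∈ Finset.univ.filter (fun b => b ∈ LinearMap.ker B), chi (g b)
      = ∑ b : LinearMap.ker B, chi (g b) := by
    rw [← Finset.sum_subtype_eq_sum_filter]
    refine Finset.sum_congr ?_ fun _ _ => rfl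
    ext; simp
  rw [e3, sum_chi (fun b : LinearMap.ker B => g b)]
  · simp only [Subtype.forall, Nat.card_eq_fintype_card]
    split_ifs <;> simp
  · intro x y
    have : B x = 0 := x.2
    simp [h x y, this]

def dotL {n : ℕ} (a : V2 n) (x : V2 n) : ZMod 2 := ∑ i, a i * x i

lemma dotL_add {n : ℕ} (a x y : V2 n) : dotL a (x + y) = dotL a x + dotL a y := by
  simp [dotL, mul_add, Finset.sum_add_distrib]

lemma IsQ.add_dot {n : ℕ} {g : V2 n → ZMod 2} {B} (h : IsQ g B) (a : V2 n) :
    IsQ (fun x => g x + dotL a x) B := by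
  intro x y
  simp only [h x y, dotL_add]
  ring

open Classical in
lemma IsQ.walsh_sq {n : ℕ} {g : V2 n → ZMod 2} {B} (h : IsQ g B) (a : V2 n) :
    walsh g a ^ 2 = if ∀ b ∈ LinearMap.ker B, g b + dotL a b = 0
      then 2 ^ n * (Nat.card (LinearMap.ker B) : ℤ) else 0 := (h.add_dot a).sq

lemma exists_walsh {n : ℕ} (g : V2 n → ZMod 2) : ∃ a, walsh g a ≠ 0 := by
  classical
  by_contra hc
  push Not at hc
  have h1 : ∑ a, walsh g a = 2 ^ n * chi (g 0) := by
    have : ∀ a, walsh g a = ∑ x, chi (g x) * chi (dotL a x) := fun a =>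
      Finset.sum_congr rfl fun x _ => chi_add _ _
    simp only [this]
    rw [Finset.sum_comm, Finset.sum_eq_single 0]
    · simp [dotL, chi_zero, mul_comm]
    · intro x _ hx
      rw [← Finset.mul_sum, sum_chi (fun a => dotL a x), if_neg]
      · simp
      · intro h0
        apply hx
        funext i
        have := h0 (Pi.single i 1)
        simpa [dotL, Pi.single_apply] using this
      · intro a b
        simp [dotL, add_mul, Finset.sum_add_distrib]
    · simp
  rw [Finset.sum_eq_zero (fun a _ => hc a)] at h1
  have : chi (g 0) ≠ 0 := by unfold chi; positivity
  have h2 : (2 : ℤ) ^ n ≠ 0 := by positivity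
  exact (mul_ne_zero h2 this) h1.symm

lemma sbLambda_sq (n : ℕ) : sbLambda n ^ 2 = 2 ^ n * 2 ^ (2 - n % 2) := by
  unfold sbLambda
  rcases Nat.even_or_odd' n with ⟨k, rfl | rfl⟩
  · rw [if_neg (by simp), ← pow_mul, ← pow_add]; congr 1; omega
  · rw [if_pos (by simp), ← pow_mul, ← pow_add]; congr 1; omega

lemma IsQ.semiBent_iff {n : ℕ} {g : V2 n → ZMod 2} {B} (h : IsQ g B) :
    semiBent g ↔ Nat.card (LinearMap.ker B) = 2 ^ (2 - n % 2) := by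
  classical
  have h2 : (2 : ℤ) ^ n ≠ 0 := by positivity
  constructor
  · intro hs
    obtain ⟨a, ha⟩ := exists_walsh g
    have h1 := h.walsh_sq a
    have h3 : walsh g a ^ 2 = sbLambda n ^ 2 := by
      rcases hs a with h0 | h0 | h0
      · exact absurd h0 ha
      · rw [h0]
      · rw [h0]; ring
    split_ifs at h1
    · rw [h3, sbLambda_sq] at h1
      have := mul_left_cancel₀ h2 h1
      exact_mod_cast this.symm
    · exact absurd (pow_eq_zero_iff (by norm_num) |>.1 h1) ha
  · intro hc a
    have h1 := h.walsh_sq a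
    split_ifs at h1
    · rw [hc] at h1
      push_cast at h1
      rw [← sbLambda_sq] at h1
      exact Or.inr (sq_eq_sq_iff_eq_or_eq_neg.1 h1)
    · exact Or.inl (pow_eq_zero_iff (by norm_num) |>.1 h1)

lemma IsQ.balanced_iff {n : ℕ} {g : V2 n → ZMod 2} {B} (hn : 0 < n) (h : IsQ g B) :
    balanced g ↔ ∃ b ∈ LinearMap.ker B, g b ≠ 0 := by
  have h1 := h.sq
  have h2 : (2 : ℤ) ^ n ≠ 0 := by positivity
  have h3 : ∑ x, chi (g x) = 2 ^ n - 2 * ((Finset.univ.filter fun x => g x = 1).card : ℤ) := by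
    have e : ∀ x, chi (g x) = 1 - 2 * (if g x = 1 then 1 else 0) := by
      intro x; generalize g x = z; revert z; decide
    simp only [e, Finset.sum_sub_distrib, ← Finset.mul_sum, Finset.sum_boole]
    simp
  have h4 : balanced g ↔ ∑ x, chi (g x) = 0 := by
    rw [h3]; unfold balanced
    have : (2 : ℤ) ^ n = 2 * ((2 ^ (n - 1) : ℕ) : ℤ) := by
      push_cast; rw [← pow_succ']; congr 1; omega
    rw [this]
    have key : ∀ c d : ℕ, c = d ↔ 2 * (d : ℤ) - 2 * (c : ℤ) = 0 := by intro c d; omega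
    exact key _ _
  rw [h4, ← pow_eq_zero_iff (two_ne_zero), h1]
  split_ifs with hc
  · constructor
    · intro h0
      have : (Nat.card (LinearMap.ker B) : ℤ) ≠ 0 := by exact_mod_cast Nat.card_pos.ne'
      exact absurd h0 (mul_ne_zero h2 this)
    · rintro ⟨b, hb, hb'⟩; exact absurd (hc b hb) hb'
  · push Not at hc; simpa using hc
def force {α : Type} (x : ℕ) (k : ℕ → α) : α :=
  Nat.rec (k 0) (fun m _ => k (Nat.succ m)) x

def ite' {α : Type} (b : Bool) (x y : α) : α := Bool.rec y x b

def tb (x j : ℕ) : Bool := Nat.beq (Nat.land (Nat.shiftRight x j) 1) 1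

def bt (q k v : ℕ) : ℕ := Nat.mul (Nat.land (Nat.shiftRight q k) 1) v

/-- the companion matrix of the local rule, row `k` at offset `64 * k + 32` -/
def kmat (q : ℕ) : ℕ :=
  Nat.xor (bt q 0 (Nat.xor (Nat.pow 2 33) (Nat.pow 2 96)))
    (Nat.xor (bt q 1 (Nat.xor (Nat.pow 2 34) (Nat.pow 2 160)))
    (Nat.xor (bt q 2 (Nat.xor (Nat.pow 2 35) (Nat.pow 2 224)))
    (Nat.xor (bt q 3 (Nat.xor (Nat.pow 2 36) (Nat.pow 2 288)))
    (Nat.xor (bt q 4 (Nat.xor (Nat.pow 2 98) (Nat.pow 2 161)))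
    (Nat.xor (bt q 5 (Nat.xor (Nat.pow 2 99) (Nat.pow 2 225)))
    (Nat.xor (bt q 6 (Nat.xor (Nat.pow 2 100) (Nat.pow 2 289)))
    (Nat.xor (bt q 7 (Nat.xor (Nat.pow 2 163) (Nat.pow 2 226)))
    (Nat.xor (bt q 8 (Nat.xor (Nat.pow 2 164) (Nat.pow 2 290)))
    ((bt q 9 (Nat.xor (Nat.pow 2 228) (Nat.pow 2 291))))))))))))

/-- the companion matrix of `f*` with `N` windows -/
def smat (K N : ℕ) : ℕ :=
  Nat.rec 0 (fun w ih => Nat.xor (Nat.shiftLeft K (Nat.mul 65 w)) ih) N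

def initL (A n : ℕ) : List ℕ :=
  Nat.rec [] (fun i ih => force (Nat.xor (Nat.pow 2 i)
    (Nat.mod (Nat.shiftRight A (Nat.mul 64 i)) 18446744073709551616)) (fun y => y :: ih)) n

def red (j p : ℕ) (L : List ℕ) : List ℕ :=
  List.rec [] (fun x _ ih => force (ite' (tb x j) (Nat.xor x p) x) (fun y => y :: ih)) L

def step (j : ℕ) (L : List ℕ) : List ℕ :=
  List.rec [] (fun p L ih => ite' (tb p j) (red j p L) (p :: ih)) L

def run (L : List ℕ) (n : ℕ) : List ℕ :=
  Nat.rec L (fun j ih => step (Nat.add 32 j) ih) n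

def kerL (q n : ℕ) : List ℕ :=
  run (initL (smat (kmat q) (Nat.sub n 4)) n) n

def len (L : List ℕ) : ℕ := List.rec 0 (fun _ _ ih => Nat.succ ih) L

def okS (q n : ℕ) : Bool := Nat.beq (len (kerL q n)) (Nat.sub 2 (Nat.land n 1))

def ttab (q l : ℕ) : ℕ :=
  Nat.xor (bt q 0 2290649224)
    (Nat.xor (bt q 1 2694881440)
    (Nat.xor (bt q 2 2852170240)
    (Nat.xor (bt q 3 2863267840)
    (Nat.xor (bt q 4 3233857728)
    (Nat.xor (bt q 5 3422604288)
    (Nat.xor (bt q 6 3435921408)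
    (Nat.xor (bt q 7 4026593280)
    (Nat.xor (bt q 8 4042260480)
    (Nat.xor (bt q 9 4278190080)
    (Nat.xor (bt l 0 2863311530)
    (Nat.xor (bt l 1 3435973836)
    (Nat.xor (bt l 2 4042322160)
    (Nat.xor (bt l 3 4278255360)
    ((bt l 4 4294901760)))))))))))))))

def evs (T v N : ℕ) : Bool :=
  Nat.rec false (fun w ih => xor (tb T (Nat.mod (Nat.shiftRight v w) 32)) ih) N

def okB (T n : ℕ) (L : List ℕ) : Bool :=
  List.rec false (fun p _ ih => ite' (evs T p (Nat.sub n 4)) true ih) L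

def allN (p : ℕ → Bool) (k : ℕ) : Bool :=
  Nat.rec true (fun k ih => ite' ih (p (Nat.add 5 k)) false) k

def cnt (p : ℕ → Bool) (k : ℕ) : ℕ :=
  Nat.rec 0 (fun k ih => Nat.add (ite' (p k) 1 0) ih) k

def goodS (q : ℕ) : Bool := ite' (allN (okS q) 16) (ite' (Nat.beq q 0) false true) false
def goodB (q l : ℕ) : Bool := force (ttab q l) (fun T => allN (fun n => okB T n (kerL q n)) 16)

/-! ### Correctness of the elimination -/

def b2z (b : Bool) : ZMod 2 := if b then 1 else 0

lemma b2z_xor (a b : Bool) : b2z (a ^^ b) = b2z a + b2z b := by revert a b; decide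

lemma b2z_and (a b : Bool) : b2z (a && b) = b2z a * b2z b := by revert a b; decide

lemma b2z_inj {a b : Bool} (h : b2z a = b2z b) : a = b := by revert a b; decide

lemma b2z_ne_zero {a : Bool} : b2z a ≠ 0 ↔ a = true := by revert a; decide

lemma force_eq {α : Type} (x : ℕ) (k : ℕ → α) : force x k = k x := by cases x <;> rfl

lemma ite'_eq {α : Type} (b : Bool) (x y : α) : ite' b x y = if b then x else y := by
  cases b <;> rfl

lemma tb_eq (x j : ℕ) : tb x j = x.testBit j := by
  have h : tb x j = Nat.beq ((x >>> j) &&& 1) 1 := rfl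
  rw [h, Nat.testBit_eq_decide_div_mod_eq, Nat.and_one_is_mod, Nat.shiftRight_eq_div_pow]
  rw [Bool.eq_iff_iff]; simp

lemma bt_eq (q k v : ℕ) : bt q k v = if q.testBit k then v else 0 := by
  have h : bt q k v = ((q >>> k) &&& 1) * v := rfl
  rw [h, Nat.testBit_eq_decide_div_mod_eq, Nat.and_one_is_mod, Nat.shiftRight_eq_div_pow]
  rcases Nat.mod_two_eq_zero_or_one (q / 2 ^ k) with h | h <;> simp [h]

lemma b2z_bt (q k v s : ℕ) : b2z ((bt q k v).testBit s) = b2z (q.testBit k) * b2z (v.testBit s) := by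
  rw [bt_eq]; split_ifs with h <;> simp [h, b2z]

lemma b2z_xor_tb (x y s : ℕ) :
    b2z ((Nat.xor x y).testBit s) = b2z (x.testBit s) + b2z (y.testBit s) := by
  have : Nat.xor x y = x ^^^ y := rfl
  rw [this, Nat.testBit_xor, b2z_xor]

def vec (n m : ℕ) : V2 n := fun i => b2z (m.testBit i)

lemma vec_xor (n x y : ℕ) : vec n (Nat.xor x y) = vec n x + vec n y := by
  funext i; exact b2z_xor_tb _ _ _

lemma red_cons (j p x : ℕ) (L : List ℕ) :
    red j p (x :: L) = (if x.testBit j then Nat.xor x p else x) :: red j p L := by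
  have : red j p (x :: L) =
    force (ite' (tb x j) (Nat.xor x p) x) (fun y => y :: red j p L) := rfl
  rw [this, force_eq, ite'_eq, tb_eq]

lemma red_eq (j p : ℕ) (L : List ℕ) :
    red j p L = L.map (fun x => if x.testBit j then Nat.xor x p else x) := by
  induction L with
  | nil => rfl
  | cons x L ih => rw [red_cons, ih, List.map_cons]

lemma step_cons (j p : ℕ) (L : List ℕ) :
    step j (p :: L) = if p.testBit j then red j p L else p :: step j L := by
  have : step j (p :: L) = ite' (tb p j) (red j p L) (p :: step j L) := rfl
  rw [this, ite'_eq, tb_eq]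

lemma run_succ (L : List ℕ) (m : ℕ) : run L (m + 1) = step (32 + m) (run L m) := rfl

lemma step_closed (P : ℕ → Prop) (hP : ∀ x y, P x → P y → P (Nat.xor x y)) (j : ℕ) (L : List ℕ)
    (hL : ∀ x ∈ L, P x) : ∀ x ∈ step j L, P x := by
  induction L with
  | nil => intro x hx; exact absurd hx (List.not_mem_nil)
  | cons p L ih =>
    rw [step_cons]
    have hp := hL p (by simp)
    have hL' : ∀ x ∈ L, P x := fun x hx => hL x (by simp [hx])
    split_ifs
    · rw [red_eq]
      intro x hx
      obtain ⟨y, hy, rfl⟩ := List.mem_map.1 hx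
      split_ifs
      · exact hP _ _ (hL' y hy) hp
      · exact hL' y hy
    · intro x hx
      rcases List.mem_cons.1 hx with rfl | hx
      · exact hp
      · exact ih hL' x hx

def sp (n : ℕ) (L : List ℕ) : Submodule (ZMod 2) (V2 n) :=
  Submodule.span (ZMod 2) (vec n '' {x | x ∈ L})

lemma sp_cons (n p : ℕ) (L : List ℕ) :
    sp n (p :: L) = Submodule.span (ZMod 2) {vec n p} ⊔ sp n L := by
  unfold sp
  rw [← Submodule.span_union]
  congr 1
  ext u; simp [eq_comm]

lemma mem_sp {n : ℕ} {L : List ℕ} {x : ℕ} (h : x ∈ L) : vec n x ∈ sp n L :=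
  Submodule.subset_span ⟨x, h, rfl⟩

lemma sp_le {n : ℕ} {L : List ℕ} {W : Submodule (ZMod 2) (V2 n)} :
    sp n L ≤ W ↔ ∀ x ∈ L, vec n x ∈ W := by
  unfold sp
  rw [Submodule.span_le]
  constructor
  · intro h x hx; exact h ⟨x, hx, rfl⟩
  · rintro h _ ⟨x, hx, rfl⟩; exact h x hx

lemma step_sp {n : ℕ} (j : ℕ) (φ : V2 n →ₗ[ZMod 2] ZMod 2) (L : List ℕ)
    (hL : ∀ x ∈ L, φ (vec n x) = b2z (x.testBit j)) :
    sp n (step j L) = sp n L ⊓ LinearMap.ker φ := by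
  induction L with
  | nil =>
    have : step j [] = [] := rfl
    rw [this]
    have : sp n [] = ⊥ := by simp [sp]
    simp [this]
  | cons p L ih =>
    have hp := hL p (by simp)
    have hL' : ∀ x ∈ L, φ (vec n x) = b2z (x.testBit j) := fun x hx => hL x (by simp [hx])
    rw [step_cons]
    split_ifs with hb
    · rw [hb] at hp
      have hp1 : φ (vec n p) = 1 := hp
      apply le_antisymm
      · rw [sp_le, red_eq]
        intro x hx
        obtain ⟨y, hy, rfl⟩ := List.mem_map.1 hx
        have hy' := hL' y hy
        have m1 : vec n y ∈ sp n (p :: L) := mem_sp (by simp [hy])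
        have m2 : vec n p ∈ sp n (p :: L) := mem_sp (by simp)
        split_ifs with hyb
        · rw [vec_xor]
          refine ⟨add_mem m1 m2, ?_⟩
          rw [hyb] at hy'
          rw [SetLike.mem_coe, LinearMap.mem_ker, map_add, hp1, hy']
          decide
        · refine ⟨m1, ?_⟩
          rw [SetLike.mem_coe, LinearMap.mem_ker, hy']
          simp [hyb, b2z]
      · have key : ∀ y ∈ sp n L, y + φ y • vec n p ∈ sp n (red j p L) := by
          let T : V2 n →ₗ[ZMod 2] V2 n := LinearMap.id + φ.smulRight (vec n p)
          have : sp n L ≤ (sp n (red j p L)).comap T := by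
            rw [sp_le]
            intro x hx
            rw [Submodule.mem_comap]
            have hm : vec n (if x.testBit j then Nat.xor x p else x) ∈ sp n (red j p L) := by
              apply mem_sp; rw [red_eq]; exact List.mem_map.2 ⟨x, hx, rfl⟩
            have hT : T (vec n x) = vec n x + φ (vec n x) • vec n p := rfl
            rw [hT, hL' x hx]
            split_ifs at hm with hxb
            · rw [vec_xor] at hm; simpa [hxb, b2z] using hm
            · simpa [hxb, b2z] using hm
          intro y hy
          exact this hy
        rintro u ⟨hu1, hu2⟩
        rw [sp_cons] at hu1
        obtain ⟨a, ha, y, hy, rfl⟩ := Submodule.mem_sup.1 hu1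
        obtain ⟨c, rfl⟩ := Submodule.mem_span_singleton.1 ha
        rw [SetLike.mem_coe, LinearMap.mem_ker, map_add, map_smul, hp1, smul_eq_mul, mul_one] at hu2
        have hc : c = φ y := by linear_combination hu2 - z2_add_self (φ y)
        rw [hc, add_comm]
        exact key y hy
    · rw [sp_cons, ih hL', sp_cons, sup_inf_assoc_of_le]
      rw [Submodule.span_singleton_le_iff_mem, LinearMap.mem_ker, hp]
      simp [hb, b2z]

lemma step_len (j : ℕ) (L : List ℕ) :
    step j L = L ∨ (step j L).length + 1 = L.length := by
  induction L with
  | nil => exact Or.inl rfl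
  | cons p L ih =>
    rw [step_cons]
    split_ifs
    · right; rw [red_eq]; simp
    · rcases ih with h | h
      · left; rw [h]
      · right; simp [h]

lemma finrank_inf_ker {n : ℕ} (W : Submodule (ZMod 2) (V2 n)) (φ : V2 n →ₗ[ZMod 2] ZMod 2) :
    Module.finrank (ZMod 2) W ≤ Module.finrank (ZMod 2) ↥(W ⊓ LinearMap.ker φ) + 1 := by
  have h1 := Submodule.finrank_sup_add_finrank_inf_eq W (LinearMap.ker φ)
  have h2 := LinearMap.finrank_range_add_finrank_ker φ
  have h3 : Module.finrank (ZMod 2) (LinearMap.range φ) ≤ 1 := by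
    simpa using Submodule.finrank_le (LinearMap.range φ)
  have h4 := Submodule.finrank_le (W ⊔ LinearMap.ker φ)
  omega

lemma run_spec {n : ℕ} (φ : ℕ → V2 n →ₗ[ZMod 2] ZMod 2) (L : List ℕ)
    (hL : ∀ x ∈ L, ∀ j < n, φ j (vec n x) = b2z (x.testBit (32 + j)))
    (hlen : L.length ≤ Module.finrank (ZMod 2) (sp n L)) (m : ℕ) (hm : m ≤ n) :
    (∀ x ∈ run L m, ∀ j < n, φ j (vec n x) = b2z (x.testBit (32 + j))) ∧
    (run L m).length ≤ Module.finrank (ZMod 2) (sp n (run L m)) ∧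
    (∀ u, u ∈ sp n (run L m) ↔ u ∈ sp n L ∧ ∀ j < m, φ j u = 0) := by
  induction m with
  | zero => exact ⟨hL, hlen, fun u => by simp [run]⟩
  | succ m ih =>
    obtain ⟨i1, i2, i3⟩ := ih (by omega)
    have hs := step_sp (32 + m) (φ m) (run L m) (fun x hx => i1 x hx m (by omega))
    rw [run_succ]
    refine ⟨?_, ?_, ?_⟩
    · apply step_closed (fun x => ∀ j < n, φ j (vec n x) = b2z (x.testBit (32 + j))) _ _ _ i1
      intro x y hx hy j hj
      rw [vec_xor, map_add, hx j hj, hy j hj, b2z_xor_tb]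
    · rcases step_len (32 + m) (run L m) with h | h
      · rw [h]; exact i2
      · have := finrank_inf_ker (sp n (run L m)) (φ m)
        rw [← hs] at this
        omega
    · intro u
      rw [hs, Submodule.mem_inf, i3, LinearMap.mem_ker, and_assoc]
      refine and_congr_right fun _ => ?_
      constructor
      · rintro ⟨h1, h2⟩ j hj
        rcases Nat.lt_succ_iff_lt_or_eq.1 hj with h | rfl
        · exact h1 j h
        · exact h2
      · intro h
        exact ⟨fun j hj => h j (by omega), h m (by omega)⟩

lemma finrank_sp_le (n : ℕ) (L : List ℕ) : Module.finrank (ZMod 2) (sp n L) ≤ L.length := by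
  classical
  have h : sp n L = Submodule.span (ZMod 2) ((L.toFinset.image (vec n) : Finset (V2 n)) : Set (V2 n)) := by
    unfold sp; congr 1; ext; simp
  rw [h]
  exact (finrank_span_finset_le_card _).trans (Finset.card_image_le.trans (List.toFinset_card_le L))

lemma card_sp (n : ℕ) (L : List ℕ) (h : L.length ≤ Module.finrank (ZMod 2) (sp n L)) :
    Nat.card (sp n L) = 2 ^ L.length := by
  rw [Module.natCard_eq_pow_finrank (K := ZMod 2), le_antisymm (finrank_sp_le n L) h]
  simp

lemma len_eq (L : List ℕ) : len L = L.length := by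
  induction L with
  | nil => rfl
  | cons x L ih => exact congrArg Nat.succ ih

lemma initL_succ (A i : ℕ) :
    initL A (i + 1) = Nat.xor (2 ^ i) ((A >>> (64 * i)) % 2 ^ 64) :: initL A i := by
  have : initL A (i + 1) = force (Nat.xor (Nat.pow 2 i)
    (Nat.mod (Nat.shiftRight A (Nat.mul 64 i)) 18446744073709551616)) (fun y => y :: initL A i) := rfl
  rw [this, force_eq]
  rfl

lemma initL_len (A n : ℕ) : (initL A n).length = n := by
  induction n with
  | zero => rfl
  | succ n ih => rw [initL_succ, List.length_cons, ih]

lemma mem_initL (A n x : ℕ) :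
    x ∈ initL A n ↔ ∃ i < n, x = Nat.xor (2 ^ i) ((A >>> (64 * i)) % 2 ^ 64) := by
  induction n with
  | zero => simp [initL]
  | succ n ih =>
    rw [initL_succ, List.mem_cons, ih]
    constructor
    · rintro (h | ⟨i, hi, h⟩)
      · exact ⟨n, by omega, h⟩
      · exact ⟨i, by omega, h⟩
    · rintro ⟨i, hi, h⟩
      rcases Nat.lt_succ_iff_lt_or_eq.1 hi with h' | rfl
      · exact Or.inr ⟨i, h', h⟩
      · exact Or.inl h

lemma vec_two_pow {n : ℕ} (i : Fin n) : vec n (2 ^ (i : ℕ)) = Pi.single i 1 := by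
  funext k
  simp only [vec, Nat.testBit_two_pow, Pi.single_apply, b2z]
  simp [Fin.ext_iff, eq_comm]

lemma elim_spec {n : ℕ} (hn : n ≤ 32) (A : ℕ) (B : V2 n →ₗ[ZMod 2] V2 n →ₗ[ZMod 2] ZMod 2)
    (hA : ∀ i < n, ∀ j < n, B (vec n (2 ^ i)) (vec n (2 ^ j)) = b2z (A.testBit (64 * i + (32 + j))))
    (hA0 : ∀ i < n, ∀ u < 32, A.testBit (64 * i + u) = false) :
    LinearMap.ker B = sp n (run (initL A n) n) ∧
    Nat.card (LinearMap.ker B) = 2 ^ (run (initL A n) n).length := by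
  have hbit : ∀ i < n, ∀ u < 64, (Nat.xor (2 ^ i) ((A >>> (64 * i)) % 2 ^ 64)).testBit u =
      (decide (i = u) ^^ A.testBit (64 * i + u)) := by
    intro i hi u hu
    have : Nat.xor (2 ^ i) ((A >>> (64 * i)) % 2 ^ 64) = (2 ^ i) ^^^ ((A >>> (64 * i)) % 2 ^ 64) := rfl
    rw [this, Nat.testBit_xor, Nat.testBit_two_pow, Nat.testBit_mod_two_pow, Nat.testBit_shiftRight]
    simp [hu]
  have hvec : ∀ i < n, vec n (Nat.xor (2 ^ i) ((A >>> (64 * i)) % 2 ^ 64)) = vec n (2 ^ i) := by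
    intro i hi
    funext k
    have hk := k.2
    simp only [vec]
    rw [hbit i hi k (by omega), hA0 i hi k (by omega), Nat.testBit_two_pow]
    simp
  let φ : ℕ → V2 n →ₗ[ZMod 2] ZMod 2 := fun j => B.flip (vec n (2 ^ j))
  have hL : ∀ x ∈ initL A n, ∀ j < n, φ j (vec n x) = b2z (x.testBit (32 + j)) := by
    intro x hx j hj
    obtain ⟨i, hi, rfl⟩ := (mem_initL _ _ _).1 hx
    rw [hvec i hi, hbit i hi _ (by omega)]
    have : φ j (vec n (2 ^ i)) = B (vec n (2 ^ i)) (vec n (2 ^ j)) := rfl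
    rw [this, hA i hi j hj]
    have : decide (i = 32 + j) = false := by simp; omega
    rw [this]; simp
  have htop : sp n (initL A n) = ⊤ := by
    rw [eq_top_iff, ← (Pi.basisFun (ZMod 2) (Fin n)).span_eq, Submodule.span_le]
    rintro _ ⟨i, rfl⟩
    have : vec n (Nat.xor (2 ^ (i : ℕ)) ((A >>> (64 * (i : ℕ))) % 2 ^ 64)) ∈ sp n (initL A n) :=
      mem_sp ((mem_initL _ _ _).2 ⟨i, i.2, rfl⟩)
    rw [hvec i i.2, vec_two_pow] at this
    simpa using this
  obtain ⟨-, h2, h3⟩ := run_spec φ (initL A n) hL (by rw [htop, initL_len]; simp) n le_rfl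
  have hk : LinearMap.ker B = sp n (run (initL A n) n) := by
    ext u
    rw [h3, htop, LinearMap.mem_ker]
    simp only [Submodule.mem_top, true_and]
    constructor
    · intro h j _
      have : φ j u = B u (vec n (2 ^ j)) := rfl
      rw [this, h]; rfl
    · intro h
      apply (Pi.basisFun (ZMod 2) (Fin n)).ext
      intro i
      have := h i i.2
      have e : φ i u = B u (vec n (2 ^ (i : ℕ))) := rfl
      rw [e, vec_two_pow] at this
      simpa using this
  refine ⟨hk, ?_⟩
  rw [hk]
  exact card_sp n _ h2

/-! ### The quadratic rules -/

def phi (q l : ℕ) (x : V2 5) : ZMod 2 :=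
    b2z (q.testBit 0) * (x 0 * x 1) +
    b2z (q.testBit 1) * (x 0 * x 2) +
    b2z (q.testBit 2) * (x 0 * x 3) +
    b2z (q.testBit 3) * (x 0 * x 4) +
    b2z (q.testBit 4) * (x 1 * x 2) +
    b2z (q.testBit 5) * (x 1 * x 3) +
    b2z (q.testBit 6) * (x 1 * x 4) +
    b2z (q.testBit 7) * (x 2 * x 3) +
    b2z (q.testBit 8) * (x 2 * x 4) +
    b2z (q.testBit 9) * (x 3 * x 4) +
    b2z (l.testBit 0) * x 0 +
    b2z (l.testBit 1) * x 1 +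
    b2z (l.testBit 2) * x 2 +
    b2z (l.testBit 3) * x 3 +
    b2z (l.testBit 4) * x 4

def bl (q : ℕ) (x y : V2 5) : ZMod 2 :=
    b2z (q.testBit 0) * (x 0 * y 1 + x 1 * y 0) +
    b2z (q.testBit 1) * (x 0 * y 2 + x 2 * y 0) +
    b2z (q.testBit 2) * (x 0 * y 3 + x 3 * y 0) +
    b2z (q.testBit 3) * (x 0 * y 4 + x 4 * y 0) +
    b2z (q.testBit 4) * (x 1 * y 2 + x 2 * y 1) +
    b2z (q.testBit 5) * (x 1 * y 3 + x 3 * y 1) +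
    b2z (q.testBit 6) * (x 1 * y 4 + x 4 * y 1) +
    b2z (q.testBit 7) * (x 2 * y 3 + x 3 * y 2) +
    b2z (q.testBit 8) * (x 2 * y 4 + x 4 * y 2) +
    b2z (q.testBit 9) * (x 3 * y 4 + x 4 * y 3)

def win {n : ℕ} (h : 5 ≤ n) (x : V2 n) (w : Fin (n - 5 + 1)) : V2 5 :=
  fun j => x ⟨w.val + j.val, by have hi := w.isLt; have hj := j.isLt; omega⟩

lemma phi_add (q l : ℕ) (x y : V2 5) : phi q l (x + y) = phi q l x + phi q l y + bl q x y := by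
  simp only [phi, bl, Pi.add_apply]; ring

def Bs (q : ℕ) {n : ℕ} (h : 5 ≤ n) : V2 n →ₗ[ZMod 2] V2 n →ₗ[ZMod 2] ZMod 2 :=
  LinearMap.mk₂ (ZMod 2) (fun x y => ∑ w, bl q (win h x w) (win h y w))
    (by
      intro x x' y
      rw [← Finset.sum_add_distrib]
      refine Finset.sum_congr rfl fun w _ => ?_
      simp only [bl, win, Pi.add_apply]; ring)
    (by
      intro c x y
      rw [smul_eq_mul, Finset.mul_sum]
      refine Finset.sum_congr rfl fun w _ => ?_
      simp only [bl, win, Pi.smul_apply, smul_eq_mul]; ring)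
    (by
      intro x y y'
      rw [← Finset.sum_add_distrib]
      refine Finset.sum_congr rfl fun w _ => ?_
      simp only [bl, win, Pi.add_apply]; ring)
    (by
      intro c x y
      rw [smul_eq_mul, Finset.mul_sum]
      refine Finset.sum_congr rfl fun w _ => ?_
      simp only [bl, win, Pi.smul_apply, smul_eq_mul]; ring)

lemma star_isQ (q l : ℕ) {n : ℕ} (h : 5 ≤ n) : IsQ (caStar 5 n h (phi q l)) (Bs q h) := by
  intro x y
  have e : ∀ z : V2 n, caStar 5 n h (phi q l) z = ∑ w, phi q l (win h z w) := fun _ => rfl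
  have e2 : Bs q h x y = ∑ w, bl q (win h x w) (win h y w) := rfl
  rw [e, e, e, e2, ← Finset.sum_add_distrib, ← Finset.sum_add_distrib]
  exact Finset.sum_congr rfl fun w _ => phi_add q l _ _

lemma b2z_pow (m s : ℕ) : b2z ((Nat.pow 2 m).testBit s) = b2z (decide (m = s)) := by
  have : Nat.pow 2 m = 2 ^ m := rfl
  rw [this, Nat.testBit_two_pow]

lemma kmat_bit (q s : ℕ) : b2z ((kmat q).testBit s) =
    b2z (q.testBit 0) * (b2z (decide (33 = s)) + b2z (decide (96 = s))) +
    b2z (q.testBit 1) * (b2z (decide (34 = s)) + b2z (decide (160 = s))) +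
    b2z (q.testBit 2) * (b2z (decide (35 = s)) + b2z (decide (224 = s))) +
    b2z (q.testBit 3) * (b2z (decide (36 = s)) + b2z (decide (288 = s))) +
    b2z (q.testBit 4) * (b2z (decide (98 = s)) + b2z (decide (161 = s))) +
    b2z (q.testBit 5) * (b2z (decide (99 = s)) + b2z (decide (225 = s))) +
    b2z (q.testBit 6) * (b2z (decide (100 = s)) + b2z (decide (289 = s))) +
    b2z (q.testBit 7) * (b2z (decide (163 = s)) + b2z (decide (226 = s))) +
    b2z (q.testBit 8) * (b2z (decide (164 = s)) + b2z (decide (290 = s))) +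
    b2z (q.testBit 9) * (b2z (decide (228 = s)) + b2z (decide (291 = s))) := by
  simp only [kmat, b2z_xor_tb, b2z_bt, b2z_pow]
  ring

lemma smat_bit (K N t : ℕ) : b2z ((smat K N).testBit t) =
    ∑ w ∈ Finset.range N, b2z (decide (65 * w ≤ t)) * b2z (K.testBit (t - 65 * w)) := by
  induction N with
  | zero => simp [smat, b2z]
  | succ N ih =>
    have : smat K (N + 1) = Nat.xor (K <<< (65 * N)) (smat K N) := rfl
    rw [this, b2z_xor_tb, ih, Finset.sum_range_succ, Nat.testBit_shiftLeft, b2z_and]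
    simp only [ge_iff_le]
    ring

lemma ent1 (i j w a b c : ℕ) (hi : i < 20) (hj : j < 20) (hw : w < 16) (ha : a < 5) (hb : b < 5)
    (hc : c = 64 * a + b + 32) :
    b2z (decide (65 * w ≤ 64 * i + (32 + j))) * b2z (decide (c = 64 * i + (32 + j) - 65 * w)) =
    b2z (decide (i = w + a)) * b2z (decide (j = w + b)) := by
  subst hc
  rw [← b2z_and, ← b2z_and, ← Bool.decide_and, ← Bool.decide_and]
  congr 1
  rw [decide_eq_decide]
  omega

lemma ent0 (i u w a b c : ℕ) (hi : i < 20) (hj : u < 32) (hw : w < 16) (ha : a < 5) (hb : b < 5)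
    (hc : c = 64 * a + b + 32) :
    b2z (decide (65 * w ≤ 64 * i + u)) * b2z (decide (c = 64 * i + u - 65 * w)) = 0 := by
  subst hc
  rw [← b2z_and, ← Bool.decide_and]
  have : ¬ (65 * w ≤ 64 * i + u ∧ 64 * a + b + 32 = 64 * i + u - 65 * w) := by
    rintro ⟨h1, h2⟩
    have h3 : 64 * (a + w) + (b + w + 32) = 64 * i + u := by omega
    rcases lt_or_ge (a + w) i with h4 | h4 <;> omega
  simp [this, b2z]

lemma win_two_pow {n : ℕ} (h : 5 ≤ n) (i : ℕ) (w : Fin (n - 5 + 1)) (a : Fin 5) :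
    win h (vec n (2 ^ i)) w a = b2z (decide (i = w.val + a.val)) := by
  simp only [win, vec, Nat.testBit_two_pow]

lemma smat_spec (q : ℕ) {n : ℕ} (h : 5 ≤ n) (hn : n ≤ 20) :
    ∀ i < n, ∀ j < n, Bs q h (vec n (2 ^ i)) (vec n (2 ^ j)) =
      b2z ((smat (kmat q) (n - 4)).testBit (64 * i + (32 + j))) := by
  intro i hi j hj
  have hN : n - 4 = n - 5 + 1 := by omega
  rw [smat_bit, hN, Finset.sum_range]
  have e2 : ∀ x y, Bs q h x y = ∑ w, bl q (win h x w) (win h y w) := fun _ _ => rfl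
  rw [e2]
  refine Finset.sum_congr rfl fun w _ => ?_
  have hw := w.2
  rw [kmat_bit]
  simp only [bl, win_two_pow]
  have E := fun a b c ha hb hc => ent1 i j w.val a b c (by omega) (by omega) (by omega) ha hb hc
  simp only [mul_add, mul_left_comm (b2z (decide (65 * w.val ≤ 64 * i + (32 + j))))]
  rw [E 0 1 33 (by norm_num) (by norm_num) (by norm_num)]
  rw [E 1 0 96 (by norm_num) (by norm_num) (by norm_num)]
  rw [E 0 2 34 (by norm_num) (by norm_num) (by norm_num)]
  rw [E 2 0 160 (by norm_num) (by norm_num) (by norm_num)]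
  rw [E 0 3 35 (by norm_num) (by norm_num) (by norm_num)]
  rw [E 3 0 224 (by norm_num) (by norm_num) (by norm_num)]
  rw [E 0 4 36 (by norm_num) (by norm_num) (by norm_num)]
  rw [E 4 0 288 (by norm_num) (by norm_num) (by norm_num)]
  rw [E 1 2 98 (by norm_num) (by norm_num) (by norm_num)]
  rw [E 2 1 161 (by norm_num) (by norm_num) (by norm_num)]
  rw [E 1 3 99 (by norm_num) (by norm_num) (by norm_num)]
  rw [E 3 1 225 (by norm_num) (by norm_num) (by norm_num)]
  rw [E 1 4 100 (by norm_num) (by norm_num) (by norm_num)]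
  rw [E 4 1 289 (by norm_num) (by norm_num) (by norm_num)]
  rw [E 2 3 163 (by norm_num) (by norm_num) (by norm_num)]
  rw [E 3 2 226 (by norm_num) (by norm_num) (by norm_num)]
  rw [E 2 4 164 (by norm_num) (by norm_num) (by norm_num)]
  rw [E 4 2 290 (by norm_num) (by norm_num) (by norm_num)]
  rw [E 3 4 228 (by norm_num) (by norm_num) (by norm_num)]
  rw [E 4 3 291 (by norm_num) (by norm_num) (by norm_num)]
  rfl

lemma smat_zero (q : ℕ) {n : ℕ} (h : 5 ≤ n) (hn : n ≤ 20) :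
    ∀ i < n, ∀ u < 32, (smat (kmat q) (n - 4)).testBit (64 * i + u) = false := by
  intro i hi u hu
  apply b2z_inj
  rw [smat_bit]
  have : b2z false = 0 := rfl
  rw [this]
  refine Finset.sum_eq_zero fun w hw => ?_
  have hw := Finset.mem_range.1 hw
  rw [kmat_bit]
  have E := fun a b c ha hb hc => ent0 i u w a b c (by omega) hu (by omega) ha hb hc
  simp only [mul_add, mul_left_comm (b2z (decide (65 * w ≤ 64 * i + u)))]
  rw [E 0 1 33 (by norm_num) (by norm_num) (by norm_num)]
  rw [E 1 0 96 (by norm_num) (by norm_num) (by norm_num)]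
  rw [E 0 2 34 (by norm_num) (by norm_num) (by norm_num)]
  rw [E 2 0 160 (by norm_num) (by norm_num) (by norm_num)]
  rw [E 0 3 35 (by norm_num) (by norm_num) (by norm_num)]
  rw [E 3 0 224 (by norm_num) (by norm_num) (by norm_num)]
  rw [E 0 4 36 (by norm_num) (by norm_num) (by norm_num)]
  rw [E 4 0 288 (by norm_num) (by norm_num) (by norm_num)]
  rw [E 1 2 98 (by norm_num) (by norm_num) (by norm_num)]
  rw [E 2 1 161 (by norm_num) (by norm_num) (by norm_num)]
  rw [E 1 3 99 (by norm_num) (by norm_num) (by norm_num)]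
  rw [E 3 1 225 (by norm_num) (by norm_num) (by norm_num)]
  rw [E 1 4 100 (by norm_num) (by norm_num) (by norm_num)]
  rw [E 4 1 289 (by norm_num) (by norm_num) (by norm_num)]
  rw [E 2 3 163 (by norm_num) (by norm_num) (by norm_num)]
  rw [E 3 2 226 (by norm_num) (by norm_num) (by norm_num)]
  rw [E 2 4 164 (by norm_num) (by norm_num) (by norm_num)]
  rw [E 4 2 290 (by norm_num) (by norm_num) (by norm_num)]
  rw [E 3 4 228 (by norm_num) (by norm_num) (by norm_num)]
  rw [E 4 3 291 (by norm_num) (by norm_num) (by norm_num)]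
  simp

lemma kerL_spec (q : ℕ) {n : ℕ} (h : 5 ≤ n) (hn : n ≤ 20) :
    LinearMap.ker (Bs q h) = sp n (kerL q n) ∧
    Nat.card (LinearMap.ker (Bs q h)) = 2 ^ (kerL q n).length :=
  elim_spec (by omega) (smat (kmat q) (n - 4)) (Bs q h) (smat_spec q h hn) (smat_zero q h hn)

lemma okS_iff (q l : ℕ) {n : ℕ} (h : 5 ≤ n) (hn : n ≤ 20) :
    semiBent (caStar 5 n h (phi q l)) ↔ okS q n = true := by
  rw [(star_isQ q l h).semiBent_iff, (kerL_spec q h hn).2]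
  have : okS q n = Nat.beq (len (kerL q n)) (2 - (n &&& 1)) := rfl
  rw [this, len_eq, Nat.and_one_is_mod, Nat.beq_eq]
  exact (Nat.pow_right_injective (le_refl 2)).eq_iff

lemma ttab_bit (q l : ℕ) {u : ℕ} (hu : u < 32) :
    b2z ((ttab q l).testBit u) = phi q l (vec 5 u) := by
  simp only [ttab, b2z_xor_tb, b2z_bt, phi]
  rw [show b2z ((2290649224 : ℕ).testBit u) = vec 5 u 0 * vec 5 u 1 by
    revert u; decide]
  rw [show b2z ((2694881440 : ℕ).testBit u) = vec 5 u 0 * vec 5 u 2 by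
    revert u; decide]
  rw [show b2z ((2852170240 : ℕ).testBit u) = vec 5 u 0 * vec 5 u 3 by
    revert u; decide]
  rw [show b2z ((2863267840 : ℕ).testBit u) = vec 5 u 0 * vec 5 u 4 by
    revert u; decide]
  rw [show b2z ((3233857728 : ℕ).testBit u) = vec 5 u 1 * vec 5 u 2 by
    revert u; decide]
  rw [show b2z ((3422604288 : ℕ).testBit u) = vec 5 u 1 * vec 5 u 3 by
    revert u; decide]
  rw [show b2z ((3435921408 : ℕ).testBit u) = vec 5 u 1 * vec 5 u 4 by
    revert u; decide]
  rw [show b2z ((4026593280 : ℕ).testBit u) = vec 5 u 2 * vec 5 u 3 by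
    revert u; decide]
  rw [show b2z ((4042260480 : ℕ).testBit u) = vec 5 u 2 * vec 5 u 4 by
    revert u; decide]
  rw [show b2z ((4278190080 : ℕ).testBit u) = vec 5 u 3 * vec 5 u 4 by
    revert u; decide]
  rw [show b2z ((2863311530 : ℕ).testBit u) = vec 5 u 0 by
    revert u; decide]
  rw [show b2z ((3435973836 : ℕ).testBit u) = vec 5 u 1 by
    revert u; decide]
  rw [show b2z ((4042322160 : ℕ).testBit u) = vec 5 u 2 by
    revert u; decide]
  rw [show b2z ((4278255360 : ℕ).testBit u) = vec 5 u 3 by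
    revert u; decide]
  rw [show b2z ((4294901760 : ℕ).testBit u) = vec 5 u 4 by
    revert u; decide]
  ring

lemma evs_eq (q l v N : ℕ) : b2z (evs (ttab q l) v N) =
    ∑ w ∈ Finset.range N, phi q l (vec 5 ((v >>> w) % 32)) := by
  induction N with
  | zero => simp [evs, b2z]
  | succ N ih =>
    have : evs (ttab q l) v (N + 1) =
      xor (tb (ttab q l) ((v >>> N) % 32)) (evs (ttab q l) v N) := rfl
    rw [this, b2z_xor, ih, Finset.sum_range_succ, tb_eq, ttab_bit q l (Nat.mod_lt _ (by norm_num))]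
    ring

lemma evs_spec (q l v : ℕ) {n : ℕ} (h : 5 ≤ n) :
    b2z (evs (ttab q l) v (n - 4)) = caStar 5 n h (phi q l) (vec n v) := by
  have hN : n - 4 = n - 5 + 1 := by omega
  have e : ∀ z : V2 n, caStar 5 n h (phi q l) z = ∑ w, phi q l (win h z w) := fun _ => rfl
  rw [evs_eq, hN, Finset.sum_range, e]
  refine Finset.sum_congr rfl fun w _ => ?_
  congr 1
  funext a
  have ha := a.2
  simp only [win, vec]
  rw [show (32 : ℕ) = 2 ^ 5 by norm_num, Nat.testBit_mod_two_pow, Nat.testBit_shiftRight]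
  simp [ha]

lemma okB_eq (T n : ℕ) (L : List ℕ) : okB T n L = true ↔ ∃ p ∈ L, evs T p (n - 4) = true := by
  induction L with
  | nil => simp [okB]
  | cons x L ih =>
    have : okB T n (x :: L) = ite' (evs T x (n - 4)) true (okB T n L) := rfl
    rw [this, ite'_eq]
    simp only [List.exists_mem_cons_iff, ← ih]
    split_ifs with hx <;> simp [hx]

lemma okB_iff (q l : ℕ) {n : ℕ} (h : 5 ≤ n) (hn : n ≤ 20) :
    balanced (caStar 5 n h (phi q l)) ↔ okB (ttab q l) n (kerL q n) = true := by
  have hq := star_isQ q l h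
  rw [hq.balanced_iff (by omega), okB_eq]
  have hk := (kerL_spec q h hn).1
  constructor
  · rintro ⟨b, hb, hgb⟩
    by_contra hc
    push Not at hc
    apply hgb
    have hall : ∀ u ∈ sp n (kerL q n), caStar 5 n h (phi q l) u = 0 := by
      intro u hu
      unfold sp at hu
      induction hu using Submodule.span_induction with
      | mem u hu =>
        obtain ⟨x, hx, rfl⟩ := hu
        rw [← evs_spec]
        have := hc x hx
        simp [this, b2z]
      | zero => exact hq.zero
      | add x y hx hy h1 h2 =>
        have : Bs q h x = 0 := by
          rw [← LinearMap.mem_ker, hk]; exact hx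
        rw [hq x y, h1, h2, this]; simp
      | smul c x hx h1 =>
        rcases z2_cases c with rfl | rfl
        · rw [zero_smul]; exact hq.zero
        · rw [one_smul]; exact h1
    exact hall b (hk ▸ hb)
  · rintro ⟨p, hp, he⟩
    refine ⟨vec n p, ?_, ?_⟩
    · rw [hk]; exact mem_sp hp
    · rw [← evs_spec, he]; decide

lemma allN_iff (p : ℕ → Bool) (k : ℕ) : allN p k = true ↔ ∀ i < k, p (5 + i) = true := by
  induction k with
  | zero => simp [allN]
  | succ k ih =>
    have : allN p (k + 1) = ite' (allN p k) (p (5 + k)) false := rfl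
    rw [this, ite'_eq]
    constructor
    · intro hh i hi
      split_ifs at hh with h1
      rcases Nat.lt_succ_iff_lt_or_eq.1 hi with h' | rfl
      · exact ih.1 h1 i h'
      · exact hh
    · intro hh
      rw [if_pos (ih.2 fun i hi => hh i (by omega))]
      exact hh k (by omega)

lemma goodS_iff (q l : ℕ) : goodS q = true ↔
    q ≠ 0 ∧ ∀ n (h : 5 ≤ n), n ≤ 20 → semiBent (caStar 5 n h (phi q l)) := by
  have e : goodS q = true ↔ q ≠ 0 ∧ allN (okS q) 16 = true := by
    unfold goodS
    rw [ite'_eq, ite'_eq]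
    cases hq : Nat.beq q 0
    · have : q ≠ 0 := by rintro rfl; simp at hq
      simp [this]
    · have : q = 0 := Nat.eq_of_beq_eq_true hq
      simp [this]
  rw [e, allN_iff]
  refine and_congr_right fun _ => ?_
  constructor
  · intro hh n h hn
    rw [okS_iff q l h hn]
    have := hh (n - 5) (by omega)
    rwa [show 5 + (n - 5) = n by omega] at this
  · intro hh i hi
    exact (okS_iff q l (by omega) (by omega)).1 (hh (5 + i) (by omega) (by omega))

lemma goodB_iff (q l : ℕ) : goodB q l = true ↔
    ∀ n (h : 5 ≤ n), n ≤ 20 → balanced (caStar 5 n h (phi q l)) := by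
  have e : goodB q l = allN (fun n => okB (ttab q l) n (kerL q n)) 16 := by
    unfold goodB; rw [force_eq]
  rw [e, allN_iff]
  constructor
  · intro hh n h hn
    rw [okB_iff q l h hn]
    have := hh (n - 5) (by omega)
    rwa [show 5 + (n - 5) = n by omega] at this
  · intro hh i hi
    exact (okB_iff q l (by omega) (by omega)).1 (hh (5 + i) (by omega) (by omega))

/-! ### Algebraic normal forms -/

lemma anf_add {n : ℕ} (f g : V2 n → ZMod 2) (I : Finset (Fin n)) :
    anf (fun x => f x + g x) I = anf f I + anf g I := Finset.sum_add_distrib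

lemma anf_mul {n : ℕ} (c : ZMod 2) (f : V2 n → ZMod 2) (I : Finset (Fin n)) :
    anf (fun x => c * f x) I = c * anf f I := (Finset.mul_sum _ _ _).symm

lemma anf_sum {n : ℕ} {ι : Type*} (s : Finset ι) (f : ι → V2 n → ZMod 2) (I : Finset (Fin n)) :
    anf (fun x => ∑ k ∈ s, f k x) I = ∑ k ∈ s, anf (f k) I := Finset.sum_comm

lemma anf_mono {n : ℕ} (J I : Finset (Fin n)) :
    anf (fun x => ∏ i ∈ J, x i) I = if I = J then 1 else 0 := by
  unfold anf
  by_cases h : ∃ i ∈ I, i ∉ J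
  · obtain ⟨i, hi, hiJ⟩ := h
    rw [if_neg (by rintro rfl; exact hiJ hi)]
    refine Finset.sum_involution (fun x _ => x + Pi.single i 1) ?_ ?_ ?_ ?_
    · intro x _
      have : ∏ k ∈ J, (x + Pi.single i 1 : V2 n) k = ∏ k ∈ J, x k := by
        refine Finset.prod_congr rfl fun k hk => ?_
        have : k ≠ i := by rintro rfl; exact hiJ hk
        simp [this]
      simp only [this]
      exact z2_add_self _
    · intro x _ _ hx
      have := congrFun hx i
      simp at this
    · intro x hx
      simp only [Finset.mem_filter, Finset.mem_univ, true_and] at hx ⊢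
      intro k hk
      by_cases hki : k = i
      · rw [hki]; exact hi
      · apply hx; simpa [hki] using hk
    · intro x _
      rw [add_assoc, ← Pi.single_add, z2_add_self, Pi.single_zero, add_zero]
  · push Not at h
    by_cases hIJ : I = J
    · subst hIJ
      rw [if_pos rfl, Finset.sum_eq_single (fun i => if i ∈ I then 1 else 0)]
      · exact Finset.prod_eq_one fun i hi => by simp [hi]
      · intro x hx hne
        simp only [Finset.mem_filter, Finset.mem_univ, true_and] at hx
        by_contra hp
        apply hne
        funext i
        by_cases hi : i ∈ I
        · rw [if_pos hi]
          exact (z2_cases _).resolve_left fun h0 => hp (Finset.prod_eq_zero hi h0)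
        · rw [if_neg hi]
          exact (z2_cases _).resolve_right fun h0 => hi (hx i h0)
      · intro hx
        exfalso; apply hx
        simp only [Finset.mem_filter, Finset.mem_univ, true_and]
        intro i hi
        by_contra h0
        simp [h0] at hi
    · rw [if_neg hIJ]
      have : ∃ j ∈ J, j ∉ I := by
        by_contra hc
        push Not at hc
        exact hIJ (Finset.Subset.antisymm h hc)
      obtain ⟨j, hj, hjI⟩ := this
      refine Finset.sum_eq_zero fun x hx => ?_
      simp only [Finset.mem_filter, Finset.mem_univ, true_and] at hx
      exact Finset.prod_eq_zero hj ((z2_cases _).resolve_right fun h0 => hjI (hx j h0))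

lemma anf_zero {n : ℕ} (f : V2 n → ZMod 2) (h : ∀ I, anf f I = 0) : ∀ x, f x = 0 := by
  have key : ∀ (m : ℕ) (x : V2 n), (Finset.univ.filter fun i => x i = 1).card = m → f x = 0 := by
    intro m
    induction m using Nat.strong_induction_on with
    | _ m ih =>
      intro x hx
      have h1 := h (Finset.univ.filter fun i => x i = 1)
      unfold anf at h1
      rw [Finset.sum_eq_single x] at h1
      · exact h1
      · intro y hy hne
        simp only [Finset.mem_filter, Finset.mem_univ, true_and] at hy
        refine ih _ ?_ y rfl
        rw [← hx]
        apply Finset.card_lt_card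
        rw [Finset.ssubset_iff_subset_ne]
        refine ⟨fun i hi => ?_, fun he => hne ?_⟩
        · simp only [Finset.mem_filter, Finset.mem_univ, true_and] at hi ⊢
          exact hy i hi
        · funext i
          have := Finset.ext_iff.1 he i
          simp only [Finset.mem_filter, Finset.mem_univ, true_and] at this
          rcases z2_cases (x i) with hxi | hxi
          · rw [hxi]
            refine (z2_cases _).resolve_right fun h0 => ?_
            rw [this, hxi] at h0
            exact zero_ne_one h0
          · rw [hxi]; exact this.2 hxi
      · intro hc
        exfalso; apply hc; simp
  exact fun x => key _ x rfl

lemma anf_inj {n : ℕ} {f g : V2 n → ZMod 2} (h : ∀ I, anf f I = anf g I) : f = g := by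
  have := anf_zero (fun x => f x + g x) (fun I => by rw [anf_add, h, z2_add_self])
  funext x
  linear_combination this x - z2_add_self (g x)

def JJ : Fin 15 → Finset (Fin 5) :=
  ![{0, 1}, {0, 2}, {0, 3}, {0, 4}, {1, 2}, {1, 3}, {1, 4}, {2, 3}, {2, 4}, {3, 4},
    {0}, {1}, {2}, {3}, {4}]

def cf (q l : ℕ) (k : Fin 15) : ZMod 2 :=
  if k.val < 10 then b2z (q.testBit k) else b2z (l.testBit (k - 10))

lemma phi_eq (q l : ℕ) : phi q l = fun x => ∑ k, cf q l k * ∏ i ∈ JJ k, x i := by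
  funext x
  simp only [Fin.sum_univ_succ, Fin.sum_univ_zero, JJ, cf, phi]
  simp [Fin.succ]
  ring

lemma JJ_inj : Function.Injective JJ := by decide

lemma anf_phi (q l : ℕ) (I : Finset (Fin 5)) :
    anf (phi q l) I = ∑ k, cf q l k * if I = JJ k then 1 else 0 := by
  rw [phi_eq, anf_sum]
  exact Finset.sum_congr rfl fun k _ => by rw [anf_mul, anf_mono]

lemma anf_phi_JJ (q l : ℕ) (k : Fin 15) : anf (phi q l) (JJ k) = cf q l k := by
  rw [anf_phi, Finset.sum_eq_single k]
  · simp
  · intro k' _ hne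
    rw [if_neg (fun h => hne (JJ_inj h).symm), mul_zero]
  · simp

lemma anf_phi_of_ne (q l : ℕ) (I : Finset (Fin 5)) (h : ∀ k, I ≠ JJ k) : anf (phi q l) I = 0 := by
  rw [anf_phi]
  exact Finset.sum_eq_zero fun k _ => by rw [if_neg (h k), mul_zero]

lemma JJ_card (k : Fin 15) : (JJ k).card = if k.val < 10 then 2 else 1 := by
  revert k; decide

lemma JJ_surj : ∀ I : Finset (Fin 5), I.card ≤ 2 → I ≠ ∅ → ∃ k, I = JJ k := by
  decide

lemma phi_inj {q l q' l' : ℕ} (hq : q < 2 ^ 10) (hl : l < 2 ^ 5) (hq' : q' < 2 ^ 10) (hl' : l' < 2 ^ 5)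
    (h : phi q l = phi q' l') : q = q' ∧ l = l' := by
  have hc : ∀ k, cf q l k = cf q' l' k := fun k => by rw [← anf_phi_JJ, h, anf_phi_JJ]
  constructor
  · apply Nat.eq_of_testBit_eq
    intro i
    by_cases hi : i < 10
    · have := hc ⟨i, by omega⟩
      simp only [cf, hi, if_true] at this
      exact b2z_inj this
    · have : 2 ^ 10 ≤ 2 ^ i := Nat.pow_le_pow_right (by norm_num) (by omega)
      rw [Nat.testBit_lt_two_pow (by omega), Nat.testBit_lt_two_pow (by omega)]
  · apply Nat.eq_of_testBit_eq
    intro i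
    by_cases hi : i < 5
    · have := hc ⟨10 + i, by omega⟩
      simp only [cf] at this
      rw [if_neg (by omega), if_neg (by omega), show 10 + i - 10 = i by omega] at this
      exact b2z_inj this
    · have : 2 ^ 5 ≤ 2 ^ i := Nat.pow_le_pow_right (by norm_num) (by omega)
      rw [Nat.testBit_lt_two_pow (by omega), Nat.testBit_lt_two_pow (by omega)]

lemma phi_deg {q : ℕ} (l : ℕ) (hq : q < 2 ^ 10) (h0 : q ≠ 0) :
    algDegree (phi q l) = 2 ∧ anf (phi q l) ∅ = 0 := by
  constructor
  · apply le_antisymm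
    · apply Finset.sup_le
      intro I hI
      simp only [Finset.mem_filter, Finset.mem_univ, true_and] at hI
      by_contra hc
      apply hI
      apply anf_phi_of_ne
      rintro k rfl
      rw [JJ_card] at hc
      split_ifs at hc <;> omega
    · have : ∃ i, q.testBit i = true := by
        by_contra hc
        push Not at hc
        exact h0 (Nat.eq_of_testBit_eq fun i => by simpa using hc i)
      obtain ⟨i, hi⟩ := this
      have hi10 : i < 10 := by
        by_contra hc
        have : 2 ^ 10 ≤ 2 ^ i := Nat.pow_le_pow_right (by norm_num) (by omega)
        rw [Nat.testBit_lt_two_pow (by omega)] at hi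
        exact absurd hi (by simp)
      have h2 : (JJ ⟨i, by omega⟩).card = 2 := by rw [JJ_card]; simp [hi10]
      rw [← h2]
      unfold algDegree
      apply Finset.le_sup (f := Finset.card)
      simp only [Finset.mem_filter, Finset.mem_univ, true_and]
      rw [anf_phi_JJ]
      simp [cf, hi10, hi, b2z]
  · apply anf_phi_of_ne
    decide

lemma exists_phi {f : V2 5 → ZMod 2} (h2 : algDegree f = 2) (h0 : anf f ∅ = 0) :
    ∃ q l, q < 2 ^ 10 ∧ l < 2 ^ 5 ∧ q ≠ 0 ∧ f = phi q l := by
  let q := Nat.ofBits (fun k : Fin 10 => decide (anf f (JJ ⟨k, by omega⟩) = 1))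
  let l := Nat.ofBits (fun k : Fin 5 => decide (anf f (JJ ⟨10 + k, by omega⟩) = 1))
  have hz : ∀ z : ZMod 2, b2z (decide (z = 1)) = z := by decide
  have hf : f = phi q l := by
    apply anf_inj
    intro I
    by_cases hI : I = ∅
    · rw [hI, h0, anf_phi_of_ne]; decide
    by_cases hc : I.card ≤ 2
    · obtain ⟨k, rfl⟩ := JJ_surj I hc hI
      rw [anf_phi_JJ]
      unfold cf
      split_ifs with hk
      · rw [Nat.testBit_ofBits_lt _ _ hk, hz]
      · have hk' := k.2
        rw [Nat.testBit_ofBits_lt _ _ (show k.val - 10 < 5 by omega), hz]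
        congr 2
        ext; simp; omega
    · rw [anf_phi_of_ne]
      · by_contra hne
        apply hc
        rw [← h2]
        apply Finset.le_sup (f := Finset.card)
        simpa using hne
      · rintro k rfl
        rw [JJ_card] at hc
        split_ifs at hc <;> omega
  refine ⟨q, l, Nat.ofBits_lt_two_pow _, Nat.ofBits_lt_two_pow _, ?_, hf⟩
  intro hq
  rw [hf, hq] at h2
  have : algDegree (phi 0 l) ≤ 1 := by
    apply Finset.sup_le
    intro I hI
    simp only [Finset.mem_filter, Finset.mem_univ, true_and] at hI
    by_contra hc
    apply hI
    by_cases hk : ∃ k, I = JJ k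
    · obtain ⟨k, rfl⟩ := hk
      rw [anf_phi_JJ]
      rw [JJ_card] at hc
      split_ifs at hc with h10
      · simp [cf, h10, b2z]
      · omega
    · push Not at hk
      exact anf_phi_of_ne _ _ _ hk
  omega

/-! ### Counting -/

lemma card_param (P : (V2 5 → ZMod 2) → Prop) (b : ℕ → ℕ → Bool) (M N : ℕ)
    (hM : M = 2 ^ 10) (hN : N = 2 ^ 5)
    (hb : ∀ q l, b q l = true ↔ q ≠ 0 ∧ P (phi q l)) :
    Nat.card {f : (Fin 5 → ZMod 2) → ZMod 2 // algDegree f = 2 ∧ anf f ∅ = 0 ∧ P f} =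
      ∑ q ∈ Finset.range M, ∑ l ∈ Finset.range N, if b q l then 1 else 0 := by
  classical
  have h1 : {f : (Fin 5 → ZMod 2) → ZMod 2 | algDegree f = 2 ∧ anf f ∅ = 0 ∧ P f} =
      ((((Finset.range M ×ˢ Finset.range N).filter (fun p => b p.1 p.2 = true)).image
        (fun p => phi p.1 p.2) : Finset (V2 5 → ZMod 2)) : Set (V2 5 → ZMod 2)) := by
    ext f
    simp only [Set.mem_ofPred_eq, Finset.coe_image, Finset.coe_filter, Finset.mem_product,
      Finset.mem_range, Set.mem_image, Prod.exists]
    constructor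
    · rintro ⟨h2, h0, hP⟩
      obtain ⟨q, l, hq, hl, hq0, rfl⟩ := exists_phi h2 h0
      exact ⟨q, l, ⟨⟨hM ▸ hq, hN ▸ hl⟩, (hb q l).2 ⟨hq0, hP⟩⟩, rfl⟩
    · rintro ⟨q, l, ⟨⟨hq, hl⟩, hbb⟩, rfl⟩
      obtain ⟨hq0, hP⟩ := (hb q l).1 hbb
      obtain ⟨h2, h0⟩ := phi_deg l (hM ▸ hq) hq0
      exact ⟨h2, h0, hP⟩
  have h2 : Nat.card {f : (Fin 5 → ZMod 2) → ZMod 2 // algDegree f = 2 ∧ anf f ∅ = 0 ∧ P f} =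
      Set.ncard {f : (Fin 5 → ZMod 2) → ZMod 2 | algDegree f = 2 ∧ anf f ∅ = 0 ∧ P f} := rfl
  rw [h2, h1, Set.ncard_coe_finset, Finset.card_image_of_injOn, Finset.card_filter,
    Finset.sum_product]
  rintro ⟨q, l⟩ hp ⟨q', l'⟩ hp' he
  simp only [Finset.coe_filter, Finset.mem_product, Finset.mem_range, Set.mem_ofPred_eq] at hp hp'
  obtain ⟨e1, e2⟩ := phi_inj (hM ▸ hp.1.1) (hN ▸ hp.1.2) (hM ▸ hp'.1.1) (hN ▸ hp'.1.2) he
  exact Prod.ext e1 e2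

lemma cnt_eq (p : ℕ → Bool) (k : ℕ) : cnt p k = ∑ i ∈ Finset.range k, if p i then 1 else 0 := by
  induction k with
  | zero => rfl
  | succ k ih =>
    have : cnt p (k + 1) = ite' (p k) 1 0 + cnt p k := rfl
    rw [this, ite'_eq, ih, Finset.sum_range_succ, add_comm]

def totG (gS : ℕ → Bool) (gB : ℕ → ℕ → Bool) (m k : ℕ) : ℕ :=
  Nat.rec 0 (fun q ih => Nat.add (ite' (gS q) (cnt (gB q) m) 0) ih) k

lemma totG_eq (gS : ℕ → Bool) (gB : ℕ → ℕ → Bool) (m k : ℕ) :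
    (∑ q ∈ Finset.range k, ∑ l ∈ Finset.range m, if (gS q && gB q l) then 1 else 0) =
      totG gS gB m k := by
  induction k with
  | zero => rfl
  | succ k ih =>
    have : totG gS gB m (k + 1) = ite' (gS k) (cnt (gB k) m) 0 + totG gS gB m k := rfl
    rw [this, ite'_eq, ← ih, Finset.sum_range_succ, add_comm, cnt_eq]
    cases gS k <;> simp

lemma sum1 (gS : ℕ → Bool) (k m : ℕ) :
    (∑ q ∈ Finset.range k, ∑ _l ∈ Finset.range m, if gS q then 1 else 0) = m * cnt gS k := by
  simp only [Finset.sum_const, Finset.card_range, smul_eq_mul]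
  rw [← Finset.mul_sum, ← cnt_eq]

lemma star5 (f : V2 5 → ZMod 2) (h : 5 ≤ 5) : caStar 5 5 h f = f := by
  funext x
  have : caStar 5 5 h f x = ∑ i : Fin 1, f (fun j => x ⟨i.val + j.val, by omega⟩) := rfl
  rw [this, Fin.sum_univ_one]
  congr 1
  funext j
  congr 1
  ext; simp

lemma comp1 : cnt goodS 1024 = 69 := by decide +kernel

lemma comp2 : totG goodS goodB 32 1024 = 280 := by decide +kernel

/-- there are exactly 2208 quadratic 5-variable functions (zero constant
term) that are semi-bent and yield semi-bent `f*` for all `5 ≤ n ≤ 20`; exactly 280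
of them moreover yield balanced `f*` for all `5 ≤ n ≤ 20`. -/
theorem quadratic5_semibent_count :
    Nat.card {f : (Fin 5 → ZMod 2) → ZMod 2 //
      algDegree f = 2 ∧ anf f ∅ = 0 ∧ semiBent f ∧
      ∀ n (h : 5 ≤ n), n ≤ 20 → semiBent (caStar 5 n h f)} = 2208 ∧
    Nat.card {f : (Fin 5 → ZMod 2) → ZMod 2 //
      algDegree f = 2 ∧ anf f ∅ = 0 ∧ semiBent f ∧
      (∀ n (h : 5 ≤ n), n ≤ 20 → semiBent (caStar 5 n h f)) ∧
      (∀ n (h : 5 ≤ n), n ≤ 20 → balanced (caStar 5 n h f))} = 280 := by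
  constructor
  · rw [card_param (fun f => semiBent f ∧ ∀ n (h : 5 ≤ n), n ≤ 20 → semiBent (caStar 5 n h f))
      (fun q _ => goodS q) 1024 32 (by norm_num) (by norm_num), sum1, comp1]
    · intro q l
      rw [goodS_iff q l]
      refine and_congr_right fun _ => ⟨fun h => ⟨?_, h⟩, fun h => h.2⟩
      have := h 5 le_rfl (by norm_num)
      rwa [star5] at this
  · rw [card_param (fun f => semiBent f ∧
      (∀ n (h : 5 ≤ n), n ≤ 20 → semiBent (caStar 5 n h f)) ∧
      (∀ n (h : 5 ≤ n), n ≤ 20 → balanced (caStar 5 n h f)))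
      (fun q l => goodS q && goodB q l) 1024 32 (by norm_num) (by norm_num), totG_eq, comp2]
    · intro q l
      rw [Bool.and_eq_true, goodS_iff q l, goodB_iff]
      constructor
      · rintro ⟨⟨h0, h⟩, hb⟩
        refine ⟨h0, ?_, h, hb⟩
        have := h 5 le_rfl (by norm_num)
        rwa [star5] at this
      · rintro ⟨h0, -, h, hb⟩
        exact ⟨⟨h0, h⟩, hb⟩
end

section
/- Let f: F_2^3 → F_2 be the elementary CA rule 30, i.e. f(x_1, x_2, x_3) = x_1 ⊕ x_2 ⊕ x_3 ⊕ x_2 x_3. Then for every n with 3 ≤ n ≤ 20, the function f*: F_2^n → F_2 given by the CA-based construction is both balanced and semi-bent. -/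
/-- Elementary CA rule 30: `f(x₁,x₂,x₃) = x₁ ⊕ x₂ ⊕ x₃ ⊕ x₂x₃`. -/
def rule30 : (Fin 3 → ZMod 2) → ZMod 2 :=
  fun x => x 0 + x 1 + x 2 + x 1 * x 2

/-- Transfer recursion for the path-shaped quadratic exponential sum. -/
def pathS : ℕ → (ℕ → ZMod 2) → ZMod 2 → ℤ
  | 0, _, _ => 1
  | k + 1, c, p => ∑ t : ZMod 2, chi (p * t + c 0 * t) * pathS k (fun i => c (i + 1)) t

lemma sum_zmod2 (f : ZMod 2 → ℤ) : ∑ t : ZMod 2, f t = f 0 + f 1 := Fin.sum_univ_two f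

lemma zmod2_cases (p : ZMod 2) : p = 0 ∨ p = 1 := by revert p; decide

lemma pathS_two (k : ℕ) (c : ℕ → ZMod 2) (p : ZMod 2) :
    pathS (k + 2) c p = 2 * chi (c 1 * (p + c 0)) * pathS k (fun i => c (i + 2)) (p + c 0) := by
  have h00 : chi 0 = 1 := by decide
  have h11 : chi 1 = -1 := by decide
  have h2 : (1 + 1 : ZMod 2) = 0 := by decide
  simp only [pathS, sum_zmod2, zero_add]
  rcases zmod2_cases p with rfl | rfl <;> rcases zmod2_cases (c 0) with h0 | h0 <;>
    rcases zmod2_cases (c 1) with h1 | h1 <;>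
    simp [h0, h1, h00, h11, h2, add_assoc] <;> ring

lemma pathS_even (m : ℕ) : ∀ (c : ℕ → ZMod 2) (p : ZMod 2),
    pathS (2 * m) c p = 2 ^ m ∨ pathS (2 * m) c p = - 2 ^ m := by
  induction m with
  | zero => intro c p; left; rfl
  | succ m ih =>
    intro c p
    rw [show 2 * (m + 1) = 2 * m + 2 by ring, pathS_two]
    have hc : ∀ z, chi z = 1 ∨ chi z = -1 := by decide
    rcases hc (c 1 * (p + c 0)) with h | h <;>
      rcases ih (fun i => c (i + 2)) (p + c 0) with h' | h' <;> rw [h, h', pow_succ]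
    · left; ring
    · right; ring
    · right; ring
    · left; ring

lemma pathS_odd (m : ℕ) : ∀ (c : ℕ → ZMod 2) (p : ZMod 2),
    pathS (2 * m + 1) c p = 0 ∨ pathS (2 * m + 1) c p = 2 ^ (m + 1) ∨
      pathS (2 * m + 1) c p = - 2 ^ (m + 1) := by
  induction m with
  | zero =>
    intro c p
    simp only [pathS, sum_zmod2]
    generalize c 0 = z
    revert p z; decide
  | succ m ih =>
    intro c p
    rw [show 2 * (m + 1) + 1 = 2 * m + 1 + 2 by ring, pathS_two]
    have hc : ∀ z, chi z = 1 ∨ chi z = -1 := by decide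
    rcases hc (c 1 * (p + c 0)) with h | h <;>
      rcases ih (fun i => c (i + 2)) (p + c 0) with h' | h' | h' <;> rw [h, h', pow_succ _ (m + 1)]
    · left; ring
    · right; left; ring
    · right; right; ring
    · left; ring
    · right; right; ring
    · right; left; ring

lemma sum_cons (k : ℕ) (F : (Fin (k + 1) → ZMod 2) → ℤ) :
    ∑ x, F x = ∑ t : ZMod 2, ∑ y : Fin k → ZMod 2, F (Fin.cons t y) := by
  rw [← Fintype.sum_prod_type']
  exact (Equiv.sum_comp (Fin.consEquiv (fun _ : Fin (k + 1) => ZMod 2)) F).symm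

lemma sum_path (k : ℕ) : ∀ (c : ℕ → ZMod 2) (p : ZMod 2),
    ∑ x : Fin k → ZMod 2, chi (∑ i : Fin k, c i * x i +
      ∑ i : Fin k, x i * (Fin.cons p x : Fin (k + 1) → ZMod 2) i.castSucc) = pathS k c p := by
  induction k with
  | zero => intro c p; simp [pathS, chi]
  | succ k ih =>
    intro c p
    rw [sum_cons, pathS]
    refine Finset.sum_congr rfl fun t _ => ?_
    rw [← ih, Finset.mul_sum]
    refine Finset.sum_congr rfl fun y _ => ?_
    rw [← chi_add]
    congr 1
    rw [Fin.sum_univ_succ, Fin.sum_univ_succ]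
    simp only [Fin.cons_zero, Fin.cons_succ, Fin.castSucc_zero, Fin.val_zero, Fin.val_succ,
      ← Fin.succ_castSucc]
    ring

/-- Coefficients of the linear part. -/
def linC (k : ℕ) (m : ℕ) : ZMod 2 :=
  ∑ i : Fin (k + 1), ((if m = i.val then 1 else 0) + (if m = i.val + 1 then 1 else 0)
    + (if m = i.val + 2 then 1 else 0))

lemma linC_zero (k : ℕ) : linC k 0 = 1 := by
  rw [linC, Fin.sum_univ_succ]; simp

lemma pick {n : ℕ} (x : Fin n → ZMod 2) (j : ℕ) (hj : j < n) :
    ∑ m : Fin n, (if m.val = j then 1 else 0) * x m = x ⟨j, hj⟩ := by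
  rw [Finset.sum_eq_single ⟨j, hj⟩]
  · simp
  · intro b _ hb
    have : b.val ≠ j := fun h => hb (Fin.ext h)
    simp [this]
  · simp

lemma lin_sum (k : ℕ) (x : Fin (k + 3) → ZMod 2) :
    ∑ m : Fin (k + 3), linC k m * x m = ∑ i : Fin (k + 1),
      (x ⟨i.val, by omega⟩ + x ⟨i.val + 1, by omega⟩ + x ⟨i.val + 2, by omega⟩) := by
  simp only [linC, Finset.sum_mul]
  rw [Finset.sum_comm]
  refine Finset.sum_congr rfl fun i _ => ?_
  simp only [add_mul, Finset.sum_add_distrib]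
  rw [pick, pick, pick]

lemma caStar_eq (k : ℕ) (h : 3 ≤ k + 3) (x : Fin (k + 3) → ZMod 2) :
    caStar 3 (k + 3) h rule30 x = ∑ m : Fin (k + 3), linC k m * x m +
      ∑ i : Fin (k + 1), x ⟨i.val + 1, by omega⟩ * x ⟨i.val + 2, by omega⟩ := by
  rw [lin_sum, ← Finset.sum_add_distrib]
  rfl

lemma walsh_eq (k : ℕ) (h : 3 ≤ k + 3) (a : Fin (k + 3) → ZMod 2) :
    ∃ c, walsh (caStar 3 (k + 3) h rule30) a =
      (1 + chi (1 + a 0)) * pathS (k + 2) c 0 := by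
  let d : ℕ → ZMod 2 := fun m => linC k m + if hm : m < k + 3 then a ⟨m, hm⟩ else 0
  have hd0 : d 0 = 1 + a 0 := by simp [d, linC_zero]
  refine ⟨fun i => d (i + 1), ?_⟩
  have key : ∀ x, (-1 : ℤ) ^ (caStar 3 (k + 3) h rule30 x + ∑ i, a i * x i).val
      = chi (∑ m : Fin (k + 3), d m * x m +
      ∑ i : Fin (k + 1), x ⟨i.val + 1, by omega⟩ * x ⟨i.val + 2, by omega⟩) := by
    intro x
    rw [caStar_eq, chi]
    congr 2
    simp only [d, Fin.is_lt, dite_true, add_mul, Finset.sum_add_distrib]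
    ring
  rw [walsh, Finset.sum_congr rfl fun x _ => key x, sum_cons]
  have : (1 + chi (1 + a 0)) = ∑ t : ZMod 2, chi (d 0 * t) := by
    rw [sum_zmod2, hd0]; simp [chi]
  rw [this, Finset.sum_mul]
  refine Finset.sum_congr rfl fun t _ => ?_
  rw [← sum_path, Finset.mul_sum]
  refine Finset.sum_congr rfl fun y _ => ?_
  rw [← chi_add]
  congr 1
  rw [Fin.sum_univ_succ, add_assoc]
  congr 1
  congr 1
  conv_rhs => rw [Fin.sum_univ_succ]
  simp only [Fin.cons_zero, Fin.castSucc_zero, mul_zero, zero_add, ← Fin.succ_castSucc,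
    Fin.cons_succ]
  refine Finset.sum_congr rfl fun i _ => ?_
  rw [mul_comm]
  rfl

lemma balanced_of_walsh {n : ℕ} (hn : 0 < n) (f : (Fin n → ZMod 2) → ZMod 2)
    (h : walsh f 0 = 0) : balanced f := by
  have h1 : walsh f 0 = ∑ x : Fin n → ZMod 2, (1 - 2 * (if f x = 1 then 1 else 0) : ℤ) := by
    rw [walsh]
    refine Finset.sum_congr rfl fun x _ => ?_
    simp only [Pi.zero_apply, zero_mul, Finset.sum_const_zero, add_zero]
    generalize f x = z
    revert z; decide
  rw [h, Finset.sum_sub_distrib, ← Finset.mul_sum, Finset.sum_boole] at h1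
  simp only [Finset.sum_const, Finset.card_univ, Fintype.card_fun, ZMod.card, Fintype.card_fin,
    nsmul_eq_mul, mul_one] at h1
  obtain ⟨m, rfl⟩ : ∃ m, n = m + 1 := ⟨n - 1, by omega⟩
  rw [balanced]
  rw [pow_succ] at h1
  push_cast at h1
  have h2 : ((Finset.univ.filter fun x => f x = 1).card : ℤ) = 2 ^ m := by linarith
  simpa using (by exact_mod_cast h2 : (Finset.univ.filter fun x => f x = 1).card = 2 ^ m)

/-- rule 30 yields balanced semi-bent functions for all `3 ≤ n ≤ 20`. -/
theorem rule30_balanced_semibent :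
    ∀ n (h : 3 ≤ n), n ≤ 20 →
      balanced (caStar 3 n h rule30) ∧ semiBent (caStar 3 n h rule30) := by
  intro n h _
  obtain ⟨k, rfl⟩ : ∃ k, n = k + 3 := ⟨n - 3, by omega⟩
  constructor
  · apply balanced_of_walsh (by omega)
    obtain ⟨c, hc⟩ := walsh_eq k h 0
    rw [hc]
    have : (1 + chi (1 + (0 : Fin (k + 3) → ZMod 2) 0)) = 0 := by
      simp only [Pi.zero_apply]; decide
    rw [this, zero_mul]
  · intro a
    obtain ⟨c, hc⟩ := walsh_eq k h a
    rw [hc]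
    have h2 : ∀ z : ZMod 2, 1 + chi (1 + z) = 0 ∨ 1 + chi (1 + z) = 2 := by decide
    rcases h2 (a 0) with h0 | h0
    · left; rw [h0, zero_mul]
    rw [h0]
    rcases Nat.even_or_odd' k with ⟨m, rfl | rfl⟩
    · have e : sbLambda (2 * m + 3) = 2 * 2 ^ (m + 1) := by
        rw [sbLambda, if_pos ⟨m + 1, by ring⟩, show (2 * m + 3 + 1) / 2 = m + 1 + 1 by omega]
        ring
      rw [e, show 2 * m + 2 = 2 * (m + 1) by ring]
      right
      rcases pathS_even (m + 1) c 0 with h' | h' <;> rw [h']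
      · left; rfl
      · right; ring
    · have e : sbLambda (2 * m + 1 + 3) = 2 * 2 ^ (m + 2) := by
        rw [sbLambda, if_neg (by rw [Nat.not_odd_iff_even]; exact ⟨m + 2, by ring⟩),
          show (2 * m + 1 + 3 + 2) / 2 = m + 2 + 1 by omega]
        ring
      rw [e, show 2 * m + 1 + 2 = 2 * (m + 1) + 1 by ring]
      rcases pathS_odd (m + 1) c 0 with h' | h' | h' <;> rw [h']
      · left; ring
      · right; left; rfl
      · right; right; ring
end
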